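/- arXiv:1706.03576 — 3 statements merged into one kernel-verified Lean document; each statement's English description precedes it below -/
import Mathlib

section
/- Let 𝔈 be an entity-set satisfying non-interpenetration, (A, x_A) ∈ 𝔈 an entity with nonempty time-slices at t and t+1, 𝔖(x_A,t) its co-perception entities, and x̂_{V_t∖A_t} any spatial pattern on the complement V_t∖A_t of the entity's time-slice at t. Then the sum over all (B, y_B) ∈ 𝔖(x_A,t) of the probability that y_B occurs and x̂_{V_t∖A_t} occurs in one trajectory is at most the probability that x̂_{V_t∖A_t} and x_{A_{≤t}} occur in one trajectory. -/
/-!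
After exchanging the two sums, the inequality holds trajectory by trajectory. A trajectory of
probability zero contributes nothing to either side. In a trajectory of positive probability at
most one co-perception entity occurs: two different ones share their past up to `t`, so they differ
after `t`, and non-interpenetration forbids their joint occurrence (`eq_of_mem_coPerc_of_occursIn`).
If one does occur, so does its past `x_{A_{≤t}}`, and the trajectory is counted on the right.
-/

open Classical

variable {J : Type} {n : ℕ}

/-- A spatiotemporal pattern (STP) over the index set `V = J × {0,…,n}`: a partial assignment
of values to the random variables, `none` outside its domain `A ⊆ V`. -/
abbrev Pat (X : J × Fin (n+1) → Type) := ∀ i : J × Fin (n+1), Option (X i)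

/-- A trajectory: a full assignment of values to all variables. -/
abbrev Traj (X : J × Fin (n+1) → Type) := ∀ i : J × Fin (n+1), X i

/-- An STP `y` occurs in a trajectory `x` if `x` agrees with `y` on the domain of `y`. -/
def occursIn (X : J × Fin (n+1) → Type) (y : Pat X) (x : Traj X) : Prop :=
  ∀ i : J × Fin (n+1), ∀ v : X i, y i = some v → x i = v

/-- The probability that all the STPs in `ys` occur in one trajectory. -/
noncomputable def probOccur (X : J × Fin (n+1) → Type) [Fintype J] [DecidableEq J]
    [∀ i, Fintype (X i)] (p : Traj X → ℝ) (ys : Set (Pat X)) : ℝ :=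
  ∑ x : Traj X, if ∀ y ∈ ys, occursIn X y x then p x else 0

/-- The restriction `y_{B_{≤t}}` of an STP to the times `≤ t`. -/
def restrictLE (X : J × Fin (n+1) → Type) (t : Fin (n+1)) (y : Pat X) : Pat X :=
  fun i => if i.2 ≤ t then y i else none

/-- The restriction `y_{B_{>t}}` of an STP to the times `> t`. -/
def restrictGT (X : J × Fin (n+1) → Type) (t : Fin (n+1)) (y : Pat X) : Pat X :=
  fun i => if t < i.2 then y i else none

/-- The time-slice `y_{B_t}` of an STP at time `t`. -/
def sliceAt (X : J × Fin (n+1) → Type) (t : Fin (n+1)) (y : Pat X) : Pat X :=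
  fun i => if i.2 = t then y i else none

/-- The STP `y` has a nonempty time-slice at time `t`. -/
def sliceNonempty (X : J × Fin (n+1) → Type) (t : Fin (n+1)) (y : Pat X) : Prop :=
  ∃ j : J, y (j, t) ≠ none

/-- An entity-set `𝔈` satisfies non-interpenetration if any two of its entities that are
identical up to time `t` but differ after `t` can never both occur (together with their
common past) in a single trajectory of positive probability. -/
def NonInterpenetration (X : J × Fin (n+1) → Type) [Fintype J] [DecidableEq J]
    [∀ i, Fintype (X i)] (p : Traj X → ℝ) (𝔈 : Set (Pat X)) : Prop :=
  ∀ y ∈ 𝔈, ∀ z ∈ 𝔈, ∀ t : Fin (n+1),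
    restrictLE X t y = restrictLE X t z → restrictGT X t y ≠ restrictGT X t z →
      probOccur X p {restrictGT X t y, restrictGT X t z, restrictLE X t y} = 0

/-- The co-perception entities `𝔖(x_A, t)` of the entity `x_A` at time `t`: all entities with
nonempty time-slices at `t` and `t+1` that are identical to `x_A` up to time `t`. -/
def coPerc (X : J × Fin (n+1) → Type) (𝔈 : Set (Pat X)) (xA : Pat X) (t : Fin n) :
    Set (Pat X) :=
  {y | y ∈ 𝔈 ∧ sliceNonempty X t.castSucc y ∧ sliceNonempty X t.succ y ∧
    restrictLE X t.castSucc y = restrictLE X t.castSucc xA}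

/-- `env` is a spatial pattern on `V_t ∖ A_t`: its domain is exactly the set of variables at
time `t` not occupied by the entity pattern `xA`. -/
def IsEnvPatternAt (X : J × Fin (n+1) → Type) (xA : Pat X) (t : Fin (n+1))
    (env : Pat X) : Prop :=
  ∀ i : J × Fin (n+1), (env i ≠ none ↔ (i.2 = t ∧ xA i = none))

/-- An STP is determined by its past and its future relative to a time `t`. -/
lemma eq_of_restrict_eq (X : J × Fin (n+1) → Type) (t : Fin (n+1)) {y z : Pat X}
    (hle : restrictLE X t y = restrictLE X t z) (hgt : restrictGT X t y = restrictGT X t z) :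
    y = z := by
  funext i
  rcases le_or_gt i.2 t with h | h
  · simpa [restrictLE, h] using congrFun hle i
  · simpa [restrictGT, h] using congrFun hgt i

lemma occursIn_restrictLE (X : J × Fin (n+1) → Type) (t : Fin (n+1)) {y : Pat X} {x : Traj X}
    (h : occursIn X y x) : occursIn X (restrictLE X t y) x := by
  intro i v hv
  unfold restrictLE at hv
  split_ifs at hv
  exact h i v hv

lemma occursIn_restrictGT (X : J × Fin (n+1) → Type) (t : Fin (n+1)) {y : Pat X} {x : Traj X}
    (h : occursIn X y x) : occursIn X (restrictGT X t y) x := by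
  intro i v hv
  unfold restrictGT at hv
  split_ifs at hv
  exact h i v hv

lemma eq_zero_of_probOccur_eq_zero (X : J × Fin (n+1) → Type) [Fintype J] [DecidableEq J]
    [∀ i, Fintype (X i)] {p : Traj X → ℝ} (hp : ∀ x, 0 ≤ p x) {ys : Set (Pat X)}
    (h : probOccur X p ys = 0) {x : Traj X} (hx : ∀ y ∈ ys, occursIn X y x) : p x = 0 := by
  unfold probOccur at h
  rw [Finset.sum_eq_zero_iff_of_nonneg (fun x _ => by split_ifs; exacts [hp x, le_rfl])] at h
  simpa only [if_pos hx] using h x (Finset.mem_univ x)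

/-- At most one co-perception entity occurs in a trajectory of nonzero probability. -/
lemma eq_of_mem_coPerc_of_occursIn (X : J × Fin (n+1) → Type) [Fintype J] [DecidableEq J]
    [∀ i, Fintype (X i)] {p : Traj X → ℝ} (hp : ∀ x, 0 ≤ p x)
    {𝔈 : Set (Pat X)} (hNI : NonInterpenetration X p 𝔈) {t : Fin n} {xA y z : Pat X}
    (hy : y ∈ coPerc X 𝔈 xA t) (hz : z ∈ coPerc X 𝔈 xA t) {x : Traj X} (hx : p x ≠ 0)
    (hyx : occursIn X y x) (hzx : occursIn X z x) : y = z := by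
  have hle : restrictLE X t.castSucc y = restrictLE X t.castSucc z :=
    hy.2.2.2.trans hz.2.2.2.symm
  by_contra hne
  refine hx (eq_zero_of_probOccur_eq_zero X hp (hNI y hy.1 z hz.1 t.castSucc hle
    fun hgt => hne (eq_of_restrict_eq X t.castSucc hle hgt)) ?_)
  rintro w (rfl | rfl | rfl)
  · exact occursIn_restrictGT X _ hyx
  · exact occursIn_restrictGT X _ hzx
  · exact occursIn_restrictLE X _ hyx

/-- Under non-interpenetration, for any spatial pattern `x̂_{V_t∖A_t}` on the complement of the
entity's time-slice at `t`, the sum over the co-perception entities `y_B ∈ 𝔖(x_A,t)` of the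
probability that `y_B` and `x̂_{V_t∖A_t}` occur together is at most the probability that
`x̂_{V_t∖A_t}` and `x_{A_{≤t}}` occur together. -/
theorem sum_coPerc_prob_le
    (X : J × Fin (n+1) → Type) [Fintype J] [DecidableEq J] [∀ i, Fintype (X i)]
    [∀ i, Nonempty (X i)]
    (p : Traj X → ℝ) (hp : ∀ x, 0 ≤ p x) (hpsum : ∑ x : Traj X, p x = 1)
    (𝔈 : Set (Pat X)) (hNI : NonInterpenetration X p 𝔈)
    (t : Fin n) (xA : Pat X) (hxA : xA ∈ 𝔈)
    (hslice : sliceNonempty X t.castSucc xA) (hslice' : sliceNonempty X t.succ xA)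
    (env : Pat X) (henv : IsEnvPatternAt X xA t.castSucc env) :
    ∑ y ∈ Finset.univ.filter (· ∈ coPerc X 𝔈 xA t), probOccur X p {y, env} ≤
      probOccur X p {env, restrictLE X t.castSucc xA} := by
  unfold probOccur
  rw [Finset.sum_comm]
  refine Finset.sum_le_sum fun x _ => ?_
  rcases eq_or_ne (p x) 0 with hx | hx
  · simp [hx]
  by_cases hex : ∃ y ∈ coPerc X 𝔈 xA t, ∀ w ∈ ({y, env} : Set (Pat X)), occursIn X w x
  · obtain ⟨y, hy, hyx⟩ := hex
    have hyo : occursIn X y x := hyx y (Or.inl rfl)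
    rw [Finset.sum_eq_single_of_mem y (by simpa using hy), if_pos hyx, if_pos]
    · rintro w (rfl | rfl)
      · exact hyx w (Or.inr rfl)
      · rw [← hy.2.2.2]
        exact occursIn_restrictLE X _ hyo
    · intro z hz hzy
      refine if_neg fun hzx => hzy ?_
      exact eq_of_mem_coPerc_of_occursIn X hp hNI (Finset.mem_filter.mp hz).2 hy hx
        (hzx z (Or.inl rfl)) hyo
  · rw [Finset.sum_eq_zero]
    · split_ifs
      exacts [hp x, le_rfl]
    · intro y hy
      exact if_neg fun h => hex ⟨y, (Finset.mem_filter.mp hy).2, h⟩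
end

section
/- Let 𝔈 be an entity-set satisfying non-interpenetration, (A, x_A) ∈ 𝔈 an entity with nonempty time-slices at t and t+1, 𝔖(x_A,t) its co-perception entities, and η(x_A,t) the branching partition. If x̂_{V_t∖A_t} is a co-perception environment of x_A at t, then the probability that x̂_{V_t∖A_t} and x_{A_{≤t}} occur together is positive, and the normalizing sum Σ_{c ∈ η(x_A,t)} p(c | x̂_{V_t∖A_t}, x_{A_{≤t}}) is positive, where p(b | x̂_{V_t∖A_t}, x_{A_{≤t}}) := Σ_{(B,y_B) ∈ b} P(y_{B_{>t}} occurs | x̂_{V_t∖A_t} and x_{A_{≤t}} occur). Consequently the branch-morph p_{η(x_A,t)}(b | x̂_{V_t∖A_t}, x_{A_{≤t}}) := p(b | x̂, x_{A_{≤t}}) / Σ_{c ∈ η(x_A,t)} p(c | x̂, x_{A_{≤t}}) is a well-defined probability distribution on the blocks of η(x_A,t): it is nonnegative and sums to 1. -/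
/-!
A co-perception environment `x̂` comes with a co-perception entity `y` and a trajectory `x` of
positive probability in which both `y` and `x̂` occur. Since `y` agrees with `x_A` up to time `t`,
the past `x_{A_{≤t}}` and the future `y_{B_{>t}}` occur in `x` as well. So `x` witnesses both the
positivity of the conditioning event and the positivity of the summand of `y` in the value of its
block; all other summands are nonnegative. Normalization is then division by a nonzero sum.
Positivity of an occurrence probability is translated to the existence of a witnessing trajectory,
and back, by `probOccur_pos_iff`.
-/

open Classical

variable {J : Type} {n : ℕ}

noncomputable instance (X : J × Fin (n+1) → Type) [Fintype J] [DecidableEq J]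
    [∀ i, Fintype (X i)] : Fintype (Set (Pat X)) :=
  Fintype.ofFinite _

/-- The block of the branching partition `η(x_A,t)` containing the co-perception entity `y`:
all co-perception entities with the same time-slice at `t+1` as `y`. -/
def branchBlock (X : J × Fin (n+1) → Type) (𝔈 : Set (Pat X)) (xA : Pat X) (t : Fin n)
    (y : Pat X) : Set (Pat X) :=
  {z ∈ coPerc X 𝔈 xA t | sliceAt X t.succ z = sliceAt X t.succ y}

/-- The branching partition `η(x_A,t)` of `𝔖(x_A,t)`: the set of equivalence classes of the
relation identifying co-perception entities with equal time-slices at `t+1`. -/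
def branchPartition (X : J × Fin (n+1) → Type) (𝔈 : Set (Pat X)) (xA : Pat X) (t : Fin n) :
    Set (Set (Pat X)) :=
  {b | ∃ y ∈ coPerc X 𝔈 xA t, b = branchBlock X 𝔈 xA t y}

/-- The unnormalized branch value `p(b | x̂_{V_t∖A_t}, x_{A_{≤t}})`: the sum over the entities
`y_B` in the block `b` of the conditional probability that `y_{B_{>t}}` occurs given that
`x̂_{V_t∖A_t}` and `x_{A_{≤t}}` occur. -/
noncomputable def blockValue (X : J × Fin (n+1) → Type) [Fintype J] [DecidableEq J]
    [∀ i, Fintype (X i)] (p : Traj X → ℝ) (xA : Pat X) (t : Fin n) (env : Pat X)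
    (b : Set (Pat X)) : ℝ :=
  ∑ y ∈ Finset.univ.filter (· ∈ b),
    probOccur X p {restrictGT X t.castSucc y, env, restrictLE X t.castSucc xA} /
      probOccur X p {env, restrictLE X t.castSucc xA}

/-- The branch-morph: the branch values normalized by their sum over all blocks of the
branching partition. -/
noncomputable def branchMorphSTP (X : J × Fin (n+1) → Type) [Fintype J] [DecidableEq J]
    [∀ i, Fintype (X i)] (p : Traj X → ℝ) (𝔈 : Set (Pat X)) (xA : Pat X) (t : Fin n)
    (env : Pat X) (b : Set (Pat X)) : ℝ :=
  blockValue X p xA t env b /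
    ∑ c ∈ Finset.univ.filter (· ∈ branchPartition X 𝔈 xA t),
      blockValue X p xA t env c

lemma probOccur_nonneg (X : J × Fin (n+1) → Type) [Fintype J] [DecidableEq J]
    [∀ i, Fintype (X i)] {p : Traj X → ℝ} (hp : ∀ x, 0 ≤ p x) (ys : Set (Pat X)) :
    0 ≤ probOccur X p ys :=
  Finset.sum_nonneg fun x _ => by split_ifs <;> simp [hp x]

lemma probOccur_pos_iff (X : J × Fin (n+1) → Type) [Fintype J] [DecidableEq J]
    [∀ i, Fintype (X i)] {p : Traj X → ℝ} (hp : ∀ x, 0 ≤ p x) (ys : Set (Pat X)) :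
    0 < probOccur X p ys ↔ ∃ x, 0 < p x ∧ ∀ y ∈ ys, occursIn X y x := by
  unfold probOccur
  rw [Finset.sum_pos_iff_of_nonneg fun x _ => by split_ifs <;> simp [hp x]]
  refine exists_congr fun x => ?_
  by_cases h : ∀ y ∈ ys, occursIn X y x
  · rw [if_pos h]
    exact ⟨fun hx => ⟨hx.2, h⟩, fun hx => ⟨Finset.mem_univ x, hx.1⟩⟩
  · rw [if_neg h]
    exact ⟨fun hx => absurd hx.2 (lt_irrefl 0), fun hx => absurd hx.2 h⟩

lemma occursIn.restrictLE {X : J × Fin (n+1) → Type} {y : Pat X} {x : Traj X}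
    (h : occursIn X y x) (t : Fin (n+1)) : occursIn X (restrictLE X t y) x := by
  intro i v hv
  by_cases hi : i.2 ≤ t
  · exact h i v (by simpa [_root_.restrictLE, hi] using hv)
  · simp [_root_.restrictLE, hi] at hv

lemma occursIn.restrictGT {X : J × Fin (n+1) → Type} {y : Pat X} {x : Traj X}
    (h : occursIn X y x) (t : Fin (n+1)) : occursIn X (restrictGT X t y) x := by
  intro i v hv
  by_cases hi : t < i.2
  · exact h i v (by simpa [_root_.restrictGT, hi] using hv)
  · simp [_root_.restrictGT, hi] at hv

lemma blockValue_nonneg (X : J × Fin (n+1) → Type) [Fintype J] [DecidableEq J]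
    [∀ i, Fintype (X i)] {p : Traj X → ℝ} (hp : ∀ x, 0 ≤ p x) (xA : Pat X) (t : Fin n)
    (env : Pat X) (b : Set (Pat X)) : 0 ≤ blockValue X p xA t env b :=
  Finset.sum_nonneg fun _ _ =>
    div_nonneg (probOccur_nonneg X hp _) (probOccur_nonneg X hp _)

/-- For a non-interpenetrating entity-set and a co-perception environment `x̂_{V_t∖A_t}` of the
entity `x_A` at `t`: the probability that `x̂_{V_t∖A_t}` and `x_{A_{≤t}}` occur together is
positive, the normalizing sum `Σ_{c ∈ η(x_A,t)} p(c | x̂, x_{A_{≤t}})` is positive, and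
consequently the branch-morph is a well-defined probability distribution on the blocks of the
branching partition: it is nonnegative and sums to `1`. -/
theorem branchMorph_wellDefined
    (X : J × Fin (n+1) → Type) [Fintype J] [DecidableEq J] [∀ i, Fintype (X i)]
    [∀ i, Nonempty (X i)]
    (p : Traj X → ℝ) (hp : ∀ x, 0 ≤ p x) (hpsum : ∑ x : Traj X, p x = 1)
    (𝔈 : Set (Pat X)) (hNI : NonInterpenetration X p 𝔈)
    (t : Fin n) (xA : Pat X) (hxA : xA ∈ 𝔈)
    (hslice : sliceNonempty X t.castSucc xA) (hslice' : sliceNonempty X t.succ xA)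
    (env : Pat X) (henv : IsEnvPatternAt X xA t.castSucc env)
    (hco : ∃ y ∈ coPerc X 𝔈 xA t, 0 < probOccur X p {y, env}) :
    0 < probOccur X p {env, restrictLE X t.castSucc xA} ∧
    0 < (∑ c ∈ Finset.univ.filter (· ∈ branchPartition X 𝔈 xA t),
          blockValue X p xA t env c) ∧
    (∀ b ∈ branchPartition X 𝔈 xA t, 0 ≤ branchMorphSTP X p 𝔈 xA t env b) ∧
    (∑ b ∈ Finset.univ.filter (· ∈ branchPartition X 𝔈 xA t),
        branchMorphSTP X p 𝔈 xA t env b) = 1 := by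
  obtain ⟨y, hy, hpos⟩ := hco
  obtain ⟨x, hpx, hx⟩ := (probOccur_pos_iff X hp _).1 hpos
  have hyx : occursIn X y x := hx y (by simp)
  have hex : occursIn X env x := hx env (by simp)
  -- `y` and `x_A` have the same past, so the past of `x_A` occurs in `x`.
  have hAx : occursIn X (restrictLE X t.castSucc xA) x := by
    rw [← hy.2.2.2]
    exact hyx.restrictLE _
  have hden : 0 < probOccur X p {env, restrictLE X t.castSucc xA} := by
    refine (probOccur_pos_iff X hp _).2 ⟨x, hpx, ?_⟩
    rintro z (rfl | rfl) <;> assumption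
  have hnum : 0 < probOccur X p
      {restrictGT X t.castSucc y, env, restrictLE X t.castSucc xA} := by
    refine (probOccur_pos_iff X hp _).2 ⟨x, hpx, ?_⟩
    rintro z (rfl | rfl | rfl)
    · exact hyx.restrictGT _
    · exact hex
    · exact hAx
  have hblock : 0 < blockValue X p xA t env (branchBlock X 𝔈 xA t y) := by
    refine Finset.sum_pos' (fun _ _ =>
      div_nonneg (probOccur_nonneg X hp _) (probOccur_nonneg X hp _)) ⟨y, ?_, div_pos hnum hden⟩
    exact Finset.mem_filter.2 ⟨Finset.mem_univ _, hy, rfl⟩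
  have hsum : 0 < ∑ c ∈ Finset.univ.filter (· ∈ branchPartition X 𝔈 xA t),
      blockValue X p xA t env c :=
    Finset.sum_pos' (fun c _ => blockValue_nonneg X hp xA t env c)
      ⟨_, Finset.mem_filter.2 ⟨Finset.mem_univ _, y, hy, rfl⟩, hblock⟩
  refine ⟨hden, hsum, fun b _ => div_nonneg (blockValue_nonneg X hp xA t env b) hsum.le, ?_⟩
  unfold branchMorphSTP
  rw [← Finset.sum_div]
  exact div_self hsum.ne'
end

section
/- In a finite-horizon perception–action loop with entity-set 𝔈^PA, let m_{0:n} be a memory trajectory, t < n, and e ∈ 𝓔_t a co-perception environment of m_{0:n} at t (i.e., P(M_0=m_0,…,M_t=m_t, E_t=e) > 0). For m̄ ∈ 𝓜_{t+1} let b(m̄) be the block of the branching partition consisting of all memory trajectories agreeing with m_{0:t} up to t and taking value m̄ at t+1. Then the branch-morph satisfies p_{η(m_{0:n},t)}(b(m̄) | e, m_{0:t}) = P(M_{t+1}=m̄ | E_t=e, M_0=m_0,…,M_t=m_t) = f_t(m_t, e)(m̄); that is, the normalized sum over futures in the branch b(m̄) of the conditional probabilities P(M_{t+1:n}=m̂_{t+1:n},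 E_t=e | M_{0:t}=m_{0:t}) equals the transition kernel f_t(m_t,e)(m̄). -/
/-!
The joint law is Markov, so summing out the last time step of a trajectory of horizon `n + 1`
gives the joint law of horizon `n` (`sum_paJoint_succ` together with the normalisation of the
kernels). Doing this down to horizon `t + 1` and then splitting off the step `t → t + 1`, the
indicators pin `M_t` and `E_t`, so the factor `f_t(m_t, e)(m̄)` comes out of the sum: the
probability `margHistEM` equals `f_t(m_t, e)(m̄)` times a constant `A` not depending on `m̄`
(`exists_margHistEM_eq`). Summing over `m̄` identifies `A` with `margHistE`, and the branch value
is `margHistEM / margHist`, where `margHist ≥ margHistE > 0`; so the normalisation over blocks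
cancels the factor `A / margHist`.
-/

open Classical

/-- A trajectory of a time-indexed family of state spaces over the horizon `0,…,n`. -/
abbrev PATraj (M : ℕ → Type) (n : ℕ) := ∀ t : Fin (n+1), M t.val

/-- The joint distribution of the finite-horizon perception–action loop:
`p(m_0,e_0,…,m_n,e_n) = p_0(m_0,e_0) · ∏_{t<n} f_t(m_t,e_t)(m_{t+1}) · g_t(m_t,e_t)(e_{t+1})`. -/
noncomputable def paJoint (n : ℕ) (M E : ℕ → Type)
    (p0 : M 0 → E 0 → ℝ)
    (f : ∀ t, M t → E t → M (t+1) → ℝ)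
    (g : ∀ t, M t → E t → E (t+1) → ℝ)
    (m : PATraj M n) (e : PATraj E n) : ℝ :=
  p0 (m ⟨0, Nat.succ_pos n⟩) (e ⟨0, Nat.succ_pos n⟩) *
    ∏ t : Fin n,
      (f t.val (m t.castSucc) (e t.castSucc) (m t.succ) *
       g t.val (m t.castSucc) (e t.castSucc) (e t.succ))

/-- Marginal probability `P(M_0 = mh_0, …, M_t = mh_t, E_t = e)` of a memory history
together with the current environment state. -/
noncomputable def margHistE (n : ℕ) (M E : ℕ → Type)
    [∀ t, Fintype (M t)] [∀ t, Fintype (E t)]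
    (p0 : M 0 → E 0 → ℝ)
    (f : ∀ t, M t → E t → M (t+1) → ℝ)
    (g : ∀ t, M t → E t → E (t+1) → ℝ)
    (t : ℕ) (ht : t < n) (mh : PATraj M n) (e : E t) : ℝ :=
  ∑ mm : PATraj M n, ∑ ee : PATraj E n,
    if (∀ s : Fin (n+1), s.val ≤ t → mm s = mh s) ∧ ee ⟨t, by omega⟩ = e then
      paJoint n M E p0 f g mm ee else 0

/-- Marginal probability `P(M_{t+1} = m', M_0 = mh_0, …, M_t = mh_t, E_t = e)`. -/
noncomputable def margHistEM (n : ℕ) (M E : ℕ → Type)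
    [∀ t, Fintype (M t)] [∀ t, Fintype (E t)]
    (p0 : M 0 → E 0 → ℝ)
    (f : ∀ t, M t → E t → M (t+1) → ℝ)
    (g : ∀ t, M t → E t → E (t+1) → ℝ)
    (t : ℕ) (ht : t < n) (mh : PATraj M n) (e : E t) (m' : M (t+1)) : ℝ :=
  ∑ mm : PATraj M n, ∑ ee : PATraj E n,
    if (∀ s : Fin (n+1), s.val ≤ t → mm s = mh s) ∧ ee ⟨t, by omega⟩ = e ∧
       mm ⟨t+1, by omega⟩ = m' then
      paJoint n M E p0 f g mm ee else 0


/-- Marginal probability `P(M_0 = mh_0, …, M_t = mh_t)` of a memory history. -/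
noncomputable def margHist (n : ℕ) (M E : ℕ → Type)
    [∀ t, Fintype (M t)] [∀ t, Fintype (E t)]
    (p0 : M 0 → E 0 → ℝ)
    (f : ∀ t, M t → E t → M (t+1) → ℝ)
    (g : ∀ t, M t → E t → E (t+1) → ℝ)
    (t : ℕ) (mh : PATraj M n) : ℝ :=
  ∑ mm : PATraj M n, ∑ ee : PATraj E n,
    if (∀ s : Fin (n+1), s.val ≤ t → mm s = mh s) then
      paJoint n M E p0 f g mm ee else 0

/-- The unnormalized branch value `p(b(m̄) | e, m_{0:t})`: the sum, over all memory
trajectories `m̂` in the block `b(m̄)` (agreeing with `mh` up to `t` and equal to `m̄` at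
`t+1`), of `P(M_{t+1:n} = m̂_{t+1:n}, E_t = e | M_{0:t} = mh_{0:t})`. -/
noncomputable def branchNum (n : ℕ) (M E : ℕ → Type)
    [∀ t, Fintype (M t)] [∀ t, Fintype (E t)]
    (p0 : M 0 → E 0 → ℝ)
    (f : ∀ t, M t → E t → M (t+1) → ℝ)
    (g : ∀ t, M t → E t → E (t+1) → ℝ)
    (t : ℕ) (ht : t < n) (mh : PATraj M n) (e : E t) (mbar : M (t+1)) : ℝ :=
  ∑ mhat : PATraj M n,
    if (∀ s : Fin (n+1), s.val ≤ t → mhat s = mh s) ∧ mhat ⟨t+1, by omega⟩ = mbar then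
      (∑ ee : PATraj E n, if ee ⟨t, by omega⟩ = e then paJoint n M E p0 f g mhat ee else 0) /
        margHist n M E p0 f g t mh
    else 0

/-- The branch-morph: the branch values normalized by their sum over all blocks
(the blocks `b(m̄)` of the branching partition are indexed exactly by `m̄ ∈ 𝓜_{t+1}`). -/
noncomputable def branchMorph (n : ℕ) (M E : ℕ → Type)
    [∀ t, Fintype (M t)] [∀ t, Fintype (E t)]
    (p0 : M 0 → E 0 → ℝ)
    (f : ∀ t, M t → E t → M (t+1) → ℝ)
    (g : ∀ t, M t → E t → E (t+1) → ℝ)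
    (t : ℕ) (ht : t < n) (mh : PATraj M n) (e : E t) (mbar : M (t+1)) : ℝ :=
  branchNum n M E p0 f g t ht mh e mbar /
    ∑ mbar' : M (t+1), branchNum n M E p0 f g t ht mh e mbar'

/-- Extension of a trajectory with horizon `n` by a state at time `n + 1`. -/
def PATraj.snoc {M : ℕ → Type} {n : ℕ} (x : PATraj M n) (a : M (n+1)) : PATraj M (n+1) :=
  Fin.snoc (α := fun i : Fin (n+2) => M i.val) x a

lemma PATraj.snoc_castSucc {M : ℕ → Type} {n : ℕ} (x : PATraj M n) (a : M (n+1))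
    (i : Fin (n+1)) : x.snoc a i.castSucc = x i :=
  Fin.snoc_castSucc (α := fun i : Fin (n+2) => M i.val) _ _ _

lemma PATraj.snoc_last {M : ℕ → Type} {n : ℕ} (x : PATraj M n) (a : M (n+1)) :
    x.snoc a (Fin.last (n+1)) = a :=
  Fin.snoc_last (α := fun i : Fin (n+2) => M i.val) _ _

lemma PATraj.snoc_mk {M : ℕ → Type} {n : ℕ} (x : PATraj M n) (a : M (n+1))
    (t : ℕ) (h : t < n + 2) (h' : t < n + 1) : x.snoc a ⟨t, h⟩ = x ⟨t, h'⟩ :=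
  x.snoc_castSucc a ⟨t, h'⟩

lemma PATraj.snoc_mk_last {M : ℕ → Type} {n : ℕ} (x : PATraj M n) (a : M (n+1))
    (h : n + 1 < n + 2) : x.snoc a ⟨n+1, h⟩ = a :=
  x.snoc_last a

lemma PATraj.sum_succ {M : ℕ → Type} [∀ t, Fintype (M t)] {n : ℕ} (F : PATraj M (n+1) → ℝ) :
    ∑ x, F x = ∑ x : PATraj M n, ∑ a : M (n+1), F (x.snoc a) := by
  rw [← (Fin.snocEquiv (fun i : Fin (n+2) => M i.val)).sum_comp, Fintype.sum_prod_type,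
    Finset.sum_comm]
  rfl

lemma PATraj.snoc_agree_iff {M : ℕ → Type} {n t : ℕ} (ht : t ≤ n) (x : PATraj M n)
    (a : M (n+1)) (mh : PATraj M (n+1)) :
    (∀ s : Fin (n+2), s.val ≤ t → x.snoc a s = mh s) ↔
      ∀ s : Fin (n+1), s.val ≤ t → x s = mh s.castSucc := by
  constructor
  · intro h s hs
    rw [← h s.castSucc hs, PATraj.snoc_castSucc]
  · intro h s
    refine Fin.lastCases ?_ (fun i => ?_) s
    · intro hs
      simp only [Fin.val_last] at hs
      omega
    · intro hs
      rw [PATraj.snoc_castSucc]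
      exact h i hs

section

variable {M E : ℕ → Type} (p0 : M 0 → E 0 → ℝ)
  (f : ∀ t, M t → E t → M (t+1) → ℝ) (g : ∀ t, M t → E t → E (t+1) → ℝ)

lemma paJoint_snoc {n : ℕ} (x : PATraj M n) (y : PATraj E n) (a : M (n+1)) (b : E (n+1)) :
    paJoint (n+1) M E p0 f g (x.snoc a) (y.snoc b) =
      paJoint n M E p0 f g x y *
        (f n (x (Fin.last n)) (y (Fin.last n)) a * g n (x (Fin.last n)) (y (Fin.last n)) b) := by
  unfold paJoint
  rw [Fin.prod_univ_castSucc, ← mul_assoc]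
  congr 1
  · congr 1
    refine Finset.prod_congr rfl fun i _ => ?_
    have hx : x.snoc a i.castSucc.succ = x i.succ := x.snoc_castSucc a i.succ
    have hy : y.snoc b i.castSucc.succ = y i.succ := y.snoc_castSucc b i.succ
    rw [PATraj.snoc_castSucc, PATraj.snoc_castSucc, hx, hy]
    rfl
  · have hx : x.snoc a (Fin.last n).succ = a := x.snoc_last a
    have hy : y.snoc b (Fin.last n).succ = b := y.snoc_last b
    rw [PATraj.snoc_castSucc, PATraj.snoc_castSucc, hx, hy]
    rfl

lemma paJoint_nonneg (hp0 : ∀ a b, 0 ≤ p0 a b) (hf : ∀ t m e m', 0 ≤ f t m e m')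
    (hg : ∀ t m e e', 0 ≤ g t m e e') {n : ℕ} (x : PATraj M n) (y : PATraj E n) :
    0 ≤ paJoint n M E p0 f g x y :=
  mul_nonneg (hp0 _ _) (Finset.prod_nonneg fun _ _ => mul_nonneg (hf _ _ _ _) (hg _ _ _ _))

variable [∀ t, Fintype (M t)] [∀ t, Fintype (E t)]

/-- Splitting off the last time step. The event `P` may involve the memory at time `n + 1`, but
not the environment at time `n + 1`, whose kernel therefore sums to one. -/
lemma sum_paJoint_succ (hgsum : ∀ t m e, ∑ e', g t m e e' = 1) {n : ℕ}
    (P : PATraj M (n+1) → PATraj E (n+1) → Prop)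
    (Q : PATraj M n → PATraj E n → M (n+1) → Prop)
    [∀ x y, Decidable (P x y)] [∀ x y a, Decidable (Q x y a)]
    (hPQ : ∀ x y a b, P (x.snoc a) (y.snoc b) ↔ Q x y a) :
    (∑ x, ∑ y, if P x y then paJoint (n+1) M E p0 f g x y else 0) =
      ∑ x : PATraj M n, ∑ y : PATraj E n, paJoint n M E p0 f g x y *
        ∑ a, if Q x y a then f n (x (Fin.last n)) (y (Fin.last n)) a else 0 := by
  rw [PATraj.sum_succ]
  refine Finset.sum_congr rfl fun x _ => ?_
  simp_rw [PATraj.sum_succ (M := E)]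
  rw [Finset.sum_comm]
  refine Finset.sum_congr rfl fun y _ => ?_
  rw [Finset.mul_sum]
  refine Finset.sum_congr rfl fun a _ => ?_
  simp_rw [hPQ, paJoint_snoc]
  by_cases h : Q x y a
  · simp only [h, if_true]
    rw [← Finset.mul_sum, ← Finset.mul_sum]
    erw [hgsum]
    rw [mul_one]
  · simp [h]

/-- The kernel factors out of the joint probability of `M_{0:t}`, `E_t` and `M_{t+1}`. -/
lemma exists_margHistEM_eq (hfsum : ∀ t m e, ∑ m', f t m e m' = 1)
    (hgsum : ∀ t m e, ∑ e', g t m e e' = 1) (t : ℕ) (e : E t) (n : ℕ) (ht : t < n) :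
    ∀ mh : PATraj M n, ∃ A : ℝ, ∀ m' : M (t+1),
      margHistEM n M E p0 f g t ht mh e m' = f t (mh ⟨t, by omega⟩) e m' * A := by
  induction n, (show t + 1 ≤ n from ht) using Nat.le_induction with
  | base =>
    intro mh
    -- `A` is the probability of `M_{0:t} = mh_{0:t}`, `E_t = e` in the loop stopped at time `t`.
    refine ⟨∑ x : PATraj M t, ∑ y : PATraj E t,
      if (∀ s : Fin (t+1), s.val ≤ t → x s = mh s.castSucc) ∧ y (Fin.last t) = e then
        paJoint t M E p0 f g x y else 0, fun m' => ?_⟩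
    unfold margHistEM
    refine (sum_paJoint_succ p0 f g hgsum _ (fun x y a =>
      (∀ s : Fin (t+1), s.val ≤ t → x s = mh s.castSucc) ∧ y (Fin.last t) = e ∧ a = m') ?_).trans ?_
    rotate_left
    · rw [Finset.mul_sum]
      refine Finset.sum_congr rfl fun x _ => ?_
      rw [Finset.mul_sum]
      refine Finset.sum_congr rfl fun y _ => ?_
      by_cases h : (∀ s : Fin (t+1), s.val ≤ t → x s = mh s.castSucc) ∧ y (Fin.last t) = e
      · have hx : x (Fin.last t) = mh ⟨t, by omega⟩ := h.1 (Fin.last t) le_rfl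
        rw [if_pos h, mul_comm]
        congr 1
        rw [Finset.sum_eq_single m']
        · rw [if_pos ⟨h.1, h.2, rfl⟩, hx, h.2]
        · intro b _ hb
          rw [if_neg fun h' => hb h'.2.2]
        · simp
      · rw [if_neg h, mul_zero, Finset.sum_eq_zero, mul_zero]
        intro a _
        rw [if_neg fun h' => h ⟨h'.1, h'.2.1⟩]
    · intro x y a b
      rw [PATraj.snoc_agree_iff le_rfl, PATraj.snoc_mk y b t _ (by omega), PATraj.snoc_mk_last]
      rfl
  | succ n hn ih =>
    intro mh
    obtain ⟨A, hA⟩ := ih hn (fun s => mh s.castSucc)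
    refine ⟨A, fun m' => ?_⟩
    refine Eq.trans ?_ (hA m')
    unfold margHistEM
    refine (sum_paJoint_succ p0 f g hgsum _ (fun x y _ =>
      (∀ s : Fin (n+1), s.val ≤ t → x s = mh s.castSucc) ∧ y ⟨t, by omega⟩ = e ∧
        x ⟨t+1, by omega⟩ = m') ?_).trans ?_
    rotate_left
    · refine Finset.sum_congr rfl fun x _ => Finset.sum_congr rfl fun y _ => ?_
      split_ifs with h
      · erw [hfsum]
        rw [mul_one]
      · simp
    · intro x y a b
      rw [PATraj.snoc_agree_iff (by omega), PATraj.snoc_mk y b t _ (by omega),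
        PATraj.snoc_mk x a (t+1) _ (by omega)]

lemma sum_margHistEM {n t : ℕ} (ht : t < n) (mh : PATraj M n) (e : E t) :
    ∑ m', margHistEM n M E p0 f g t ht mh e m' = margHistE n M E p0 f g t ht mh e := by
  unfold margHistEM margHistE
  rw [Finset.sum_comm]
  refine Finset.sum_congr rfl fun x _ => ?_
  rw [Finset.sum_comm]
  refine Finset.sum_congr rfl fun y _ => ?_
  simp_rw [← and_assoc, ite_and _ (_ = _)]
  split_ifs <;> simp

lemma branchNum_eq {n t : ℕ} (ht : t < n) (mh : PATraj M n) (e : E t) (m' : M (t+1)) :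
    branchNum n M E p0 f g t ht mh e m' =
      margHistEM n M E p0 f g t ht mh e m' / margHist n M E p0 f g t mh := by
  unfold branchNum margHistEM
  rw [Finset.sum_div]
  refine Finset.sum_congr rfl fun x _ => ?_
  by_cases h : (∀ s : Fin (n+1), s.val ≤ t → x s = mh s) ∧ x ⟨t+1, by omega⟩ = m'
  · rw [if_pos h]
    congr 1
    refine Finset.sum_congr rfl fun y _ => ?_
    have h1 := h.1
    have h2 := h.2
    by_cases hy : y ⟨t, by omega⟩ = e
    · rw [if_pos hy, if_pos ⟨h1, hy, h2⟩]
    · rw [if_neg hy, if_neg fun h' => hy h'.2.1]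
  · rw [if_neg h, Finset.sum_eq_zero, zero_div]
    intro y _
    rw [if_neg fun h' => h ⟨h'.1, h'.2.2⟩]

lemma margHistE_le_margHist (hp0 : ∀ a b, 0 ≤ p0 a b) (hf : ∀ t m e m', 0 ≤ f t m e m')
    (hg : ∀ t m e e', 0 ≤ g t m e e') {n t : ℕ} (ht : t < n) (mh : PATraj M n) (e : E t) :
    margHistE n M E p0 f g t ht mh e ≤ margHist n M E p0 f g t mh := by
  unfold margHistE margHist
  refine Finset.sum_le_sum fun x _ => Finset.sum_le_sum fun y _ => ?_
  have := paJoint_nonneg p0 f g hp0 hf hg x y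
  split_ifs with h1 h2 h2
  · exact le_rfl
  · exact absurd h1.1 h2
  · exact this
  · exact le_rfl

end

/-- For the PA-loop entity-set `𝔈^PA`, the branch-morph of the entity `mh` at time `t`, at a
co-perception environment `e`, assigns to the block `b(m̄)` exactly the conditional probability
`P(M_{t+1} = m̄ | E_t = e, M_0 = mh_0, …, M_t = mh_t)`, which equals the kernel
`f_t(mh_t, e)(m̄)`. -/
theorem branchMorph_eq_condProb_eq_kernel
    (n : ℕ) (M E : ℕ → Type)
    [∀ t, Fintype (M t)] [∀ t, Fintype (E t)]
    [∀ t, Nonempty (M t)] [∀ t, Nonempty (E t)]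
    (p0 : M 0 → E 0 → ℝ)
    (f : ∀ t, M t → E t → M (t+1) → ℝ)
    (g : ∀ t, M t → E t → E (t+1) → ℝ)
    (hp0 : ∀ a b, 0 ≤ p0 a b) (hp0sum : ∑ a, ∑ b, p0 a b = 1)
    (hf : ∀ t m e m', 0 ≤ f t m e m') (hfsum : ∀ t m e, ∑ m', f t m e m' = 1)
    (hg : ∀ t m e e', 0 ≤ g t m e e') (hgsum : ∀ t m e, ∑ e', g t m e e' = 1)
    (t : ℕ) (ht : t < n) (mh : PATraj M n) (e : E t)
    (hco : 0 < margHistE n M E p0 f g t ht mh e)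
    (mbar : M (t+1)) :
    branchMorph n M E p0 f g t ht mh e mbar =
        margHistEM n M E p0 f g t ht mh e mbar / margHistE n M E p0 f g t ht mh e ∧
      branchMorph n M E p0 f g t ht mh e mbar = f t (mh ⟨t, by omega⟩) e mbar := by
  obtain ⟨A, hA⟩ := exists_margHistEM_eq p0 f g hfsum hgsum t e n ht mh
  have hE : margHistE n M E p0 f g t ht mh e = A := by
    rw [← sum_margHistEM]
    simp_rw [hA]
    rw [← Finset.sum_mul, hfsum, one_mul]
  have hpos : 0 < margHist n M E p0 f g t mh :=
    hco.trans_le (margHistE_le_margHist p0 f g hp0 hf hg ht mh e)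
  have hmorph : branchMorph n M E p0 f g t ht mh e mbar =
      margHistEM n M E p0 f g t ht mh e mbar / margHistE n M E p0 f g t ht mh e := by
    unfold branchMorph
    simp_rw [branchNum_eq]
    rw [← Finset.sum_div, sum_margHistEM, div_div_div_cancel_right₀ hpos.ne']
  refine ⟨hmorph, ?_⟩
  have hA0 : A ≠ 0 := hE ▸ hco.ne'
  rw [hmorph, hA, hE, mul_div_cancel_right₀ _ hA0]
end
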